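/- If state j of a Markov chain is null recurrent, then the fraction of time spent at j converges to zero almost surely: P(lim_{n→∞} M_j(n)/n = 0) = 1. -/

import Mathlib

open MeasureTheory Filter Topology
open scoped ENNReal NNReal

variable {S : Type*} [Countable S] [DecidableEq S]

/-- k-step transition probabilities of a transition matrix `P`. -/
noncomputable def kstep (P : S → S → ℝ) : ℕ → S → S → ℝ
  | 0 => fun i j => if i = j then 1 else 0
  | (k+1) => fun i j => ∑' l, kstep P k i l * P l j

/-- first passage probabilities `f^{(n)}_{ij}` (first visit to `j` at time exactly `n`). -/
noncomputable def fpass (P : S → S → ℝ) (j : S) : ℕ → S → ℝ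
  | 0 => fun _ => 0
  | 1 => fun i => P i j
  | (n+2) => fun i => ∑' l, if l = j then 0 else P i l * fpass P j (n+1) l

/-- probability `f_{ij}` of ever reaching `j` from `i`. -/
noncomputable def hitProb (P : S → S → ℝ) (i j : S) : ℝ := ∑' n, fpass P j n i

/-- mean return time `m_j` to `j` (in `ℝ≥0∞`). -/
noncomputable def meanReturn (P : S → S → ℝ) (j : S) : ℝ≥0∞ :=
  ∑' n : ℕ, (n : ℝ≥0∞) * ENNReal.ofReal (fpass P j n j)

def PositiveRecurrent (P : S → S → ℝ) (j : S) : Prop :=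
  hitProb P j j = 1 ∧ meanReturn P j < ⊤

def NullRecurrent (P : S → S → ℝ) (j : S) : Prop :=
  hitProb P j j = 1 ∧ meanReturn P j = ⊤

def Transient (P : S → S → ℝ) (j : S) : Prop := hitProb P j j < 1

/-- `X` is a time-homogeneous Markov chain on `(Ω, μ)` with transition matrix `P`. -/
structure IsMarkovChain {Ω : Type*} [MeasurableSpace Ω] [MeasurableSpace S] (μ : Measure Ω)
    (X : ℕ → Ω → S) (P : S → S → ℝ) : Prop where
  isProb : IsProbabilityMeasure μ
  meas : ∀ n, Measurable (X n)
  nonneg : ∀ i j, 0 ≤ P i j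
  rowSum : ∀ i, ∑' j, P i j = 1
  markov : ∀ n (j : S) (f : ℕ → S),
    μ ({ω | X (n+1) ω = j} ∩ {ω | ∀ m ≤ n, X m ω = f m})
      = ENNReal.ofReal (P (f n) j) * μ {ω | ∀ m ≤ n, X m ω = f m}

/-- `M_j(n)`: number of visits to `j` at times `1,…,n`. -/
noncomputable def visits {Ω : Type*} (X : ℕ → Ω → S) (j : S) (n : ℕ) (ω : Ω) : ℝ :=
  ∑ k ∈ Finset.Icc 1 n, if X k ω = j then (1:ℝ) else 0

/-!
For `0 < r < 1` let `h i = E_i[r ^ T]`, with `T` the first passage time to `j`. Following the chain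
step by step shows `P_i(M_j(n) > m) * r ^ n ≤ h i * h j ^ m`, so the probabilities of the events
`M_j(A m) > m` are bounded by a geometric sequence of ratio `h j / r ^ A`. If the mean return time
is infinite, then `1 - h j` is not `O(1 - r)` as `r → 1`, and if `j` is transient, then `h j` stays
away from `1`; either way `h j < r ^ A` for some `r < 1`. By Borel–Cantelli, almost surely
`M_j(A m) ≤ m` for all large `m`, for every `A`.
-/

section Limits

theorem tendsto_div_atTop_zero_of_eventually_mul_le {u : ℕ → ℝ} (hmono : Monotone u)
    (hnonneg : ∀ n, 0 ≤ u n) (h : ∀ A : ℕ, ∀ᶠ m : ℕ in atTop, u (A * m) ≤ m) :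
    Tendsto (fun n : ℕ => u n / n) atTop (𝓝 0) := by
  refine tendsto_order.2 ⟨fun a ha => .of_forall fun n =>
    ha.trans_le (div_nonneg (hnonneg n) n.cast_nonneg), fun ε hε => ?_⟩
  obtain ⟨A, hA⟩ := exists_nat_gt (2 / ε)
  have hA_pos : (0 : ℝ) < A := (by positivity : (0 : ℝ) < 2 / ε).trans hA
  have hA_pos' : 0 < A := by exact_mod_cast hA_pos
  have hdiv : Tendsto (fun n : ℕ => n / A + 1) atTop atTop :=
    tendsto_atTop_mono (fun _ => Nat.le_succ _) (Nat.tendsto_div_const_atTop hA_pos'.ne')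
  filter_upwards [hdiv.eventually (h A), eventually_ge_atTop A] with n hn hAn
  have hn_pos : (0 : ℝ) < n := by exact_mod_cast hA_pos'.trans_le hAn
  have one_le : (1 : ℝ) ≤ n / A := (one_le_div hA_pos).2 (by exact_mod_cast hAn)
  have hle : u n ≤ 2 * (n / A) := calc
    u n ≤ u (A * (n / A + 1)) := hmono (Nat.lt_mul_div_succ n hA_pos').le
    _ ≤ (n / A : ℕ) + 1 := by exact_mod_cast hn
    _ ≤ 2 * (n / A) := by linarith [Nat.cast_div_le (α := ℝ) (m := n) (n := A)]
  calc u n / n ≤ 2 * (n / A) / n := by gcongr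
    _ = 2 / A := by field_simp
    _ < ε := (div_lt_comm₀ hε hA_pos).1 hA

theorem geom_sum_mul_add_pow_eq_one {R : Type*} [Semiring R] {r s : R} (h : r + s = 1) (n : ℕ) :
    (∑ k ∈ Finset.range n, r ^ k) * s + r ^ n = 1 := by
  induction n with
  | zero => simp
  | succ n ih =>
    rw [Finset.sum_range_succ, add_mul, pow_succ, add_assoc, ← mul_add, add_comm s, h, mul_one, ih]

theorem eventually_tsum_mul_pow_lt_pow_of_tsum_lt_one {f : ℕ → ℝ≥0∞} (hf : ∑' n, f n < 1) (A : ℕ) :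
    ∀ᶠ r in 𝓝[<] (1 : ℝ≥0∞), ∑' n, f n * r ^ n < r ^ A := by
  have hpow : Tendsto (fun r : ℝ≥0∞ => r ^ A) (𝓝[<] 1) (𝓝 1) := by
    simpa using ((ENNReal.continuous_pow A).tendsto 1).mono_left nhdsWithin_le_nhds
  filter_upwards [hpow.eventually (lt_mem_nhds hf), self_mem_nhdsWithin] with r hr
    (hr1 : r < 1)
  exact (ENNReal.tsum_le_tsum fun n =>
    mul_le_of_le_one_right' (pow_le_one' hr1.le n)).trans_lt hr

theorem eventually_tsum_mul_pow_lt_pow_of_tsum_natCast_mul_eq_top {f : ℕ → ℝ≥0∞}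
    (hf : ∑' n, f n ≤ 1) (hmean : ∑' n, n * f n = ⊤) (A : ℕ) :
    ∀ᶠ r in 𝓝[<] (1 : ℝ≥0∞), ∑' n, f n * r ^ n < r ^ A := by
  -- As `1 - r ^ n = (1 - r) * (1 + r + ⋯ + r ^ (n - 1))`, it is enough that
  -- `∑' n, f n * (1 + r + ⋯ + r ^ (n - 1))` exceeds `A` for `r` near `1`; its value at `1` is the
  -- mean of `f`.
  have hlsc : LowerSemicontinuous fun r : ℝ≥0∞ => ∑' n, f n * ∑ k ∈ Finset.range n, r ^ k :=
    lowerSemicontinuous_tsum fun n => Continuous.lowerSemicontinuous <|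
      (ENNReal.continuous_const_mul
        (ENNReal.ne_top_of_tsum_ne_top (ne_top_of_le_ne_top ENNReal.one_ne_top hf) n)).comp
      (continuous_finsetSum _ fun k _ => ENNReal.continuous_pow k)
  have hlt_one : (A : ℝ≥0∞) < ∑' n, f n * ∑ k ∈ Finset.range n, 1 ^ k := by
    simp only [one_pow, Finset.sum_const, Finset.card_range, nsmul_one, mul_comm (f _), hmean,
      ENNReal.natCast_lt_top]
  filter_upwards [nhdsWithin_le_nhds (hlsc 1 _ hlt_one), self_mem_nhdsWithin] with r hr
    (hr1 : r < 1)
  obtain ⟨s, hs⟩ := exists_add_of_le hr1.le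
  have hs_ne_zero : s ≠ 0 := fun h => hr1.ne (by rw [hs, h, add_zero])
  have hs_ne_top : s ≠ ⊤ := ne_top_of_le_ne_top ENNReal.one_ne_top (hs ▸ le_add_self)
  have hsum : ∑' n, f n = (∑' n, f n * ∑ k ∈ Finset.range n, r ^ k) * s + ∑' n, f n * r ^ n := by
    simp only [← ENNReal.tsum_mul_right, ← ENNReal.tsum_add, mul_assoc, ← mul_add,
      geom_sum_mul_add_pow_eq_one hs.symm, mul_one]
  have hgeom : ∑ k ∈ Finset.range A, r ^ k ≤ A := by
    simpa using Finset.sum_le_card_nsmul (Finset.range A) _ 1 fun k _ => pow_le_one' hr1.le k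
  have htsum_ne_top : ∑' n, f n * r ^ n ≠ ⊤ :=
    ne_top_of_le_ne_top ENNReal.one_ne_top ((hsum ▸ le_add_self).trans hf)
  refine lt_of_add_lt_add_left (a := A * s) ?_
  calc A * s + ∑' n, f n * r ^ n
    _ < (∑' n, f n * ∑ k ∈ Finset.range n, r ^ k) * s + ∑' n, f n * r ^ n :=
        ENNReal.add_lt_add_right htsum_ne_top (ENNReal.mul_lt_mul_left hs_ne_zero hs_ne_top hr)
    _ ≤ 1 := hsum ▸ hf
    _ = (∑ k ∈ Finset.range A, r ^ k) * s + r ^ A := (geom_sum_mul_add_pow_eq_one hs.symm A).symm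
    _ ≤ A * s + r ^ A := by gcongr

end Limits

section FirstPassage

variable {α : Type*} [DecidableEq α] {P : α → α → ℝ}

theorem fpass_nonneg (hP : ∀ i l, 0 ≤ P i l) (j : α) (n : ℕ) (i : α) : 0 ≤ fpass P j n i := by
  induction n using Nat.twoStepInduction generalizing i with
  | zero => exact le_rfl
  | one => exact hP i j
  | more n _ ih =>
    refine tsum_nonneg fun l => ?_
    split_ifs
    exacts [le_rfl, mul_nonneg (hP i l) (ih l)]

theorem hitProb_eq_toReal_tsum (hP : ∀ i l, 0 ≤ P i l) (i j : α) :
    hitProb P i j = (∑' n, ENNReal.ofReal (fpass P j n i)).toReal := by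
  rw [ENNReal.tsum_toReal_eq fun _ => ENNReal.ofReal_ne_top, hitProb]
  simp only [ENNReal.toReal_ofReal (fpass_nonneg hP j _ i)]

/-- The generating function `r ↦ ∑ f^{(n)}_{ij} r^n` of the first passage time from `i` to `j`,
with values in `ℝ≥0∞` so that no summability has to be tracked. -/
noncomputable def fpassGen (P : α → α → ℝ) (j : α) (r : ℝ≥0∞) (i : α) : ℝ≥0∞ :=
  ∑' n, ENNReal.ofReal (fpass P j n i) * r ^ n

theorem fpassGen_eq_tsum_succ (P : α → α → ℝ) (j : α) (r : ℝ≥0∞) (i : α) :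
    fpassGen P j r i = ∑' n, ENNReal.ofReal (fpass P j (n + 1) i) * r ^ (n + 1) := by
  rw [fpassGen, tsum_eq_zero_add' ENNReal.summable, fpass, ENNReal.ofReal_zero, zero_mul, zero_add]

section Substochastic

variable (hP : ∀ i l, 0 ≤ P i l) (hrow : ∀ i, ∑' l, ENNReal.ofReal (P i l) ≤ 1)

include hP hrow

theorem ofReal_tsum_ite_mul (i j : α) {g : α → ℝ} (hg0 : ∀ l, 0 ≤ g l) (hg1 : ∀ l, g l ≤ 1) :
    ENNReal.ofReal (∑' l, if l = j then 0 else P i l * g l) =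
      ∑' l, if l = j then 0 else ENNReal.ofReal (P i l) * ENNReal.ofReal (g l) := by
  have hsummable : Summable (P i) := by
    simpa [ENNReal.toReal_ofReal, hP] using
      ENNReal.summable_toReal (ne_top_of_le_ne_top ENNReal.one_ne_top (hrow i))
  have hnonneg (l : α) : 0 ≤ if l = j then 0 else P i l * g l := by
    split_ifs
    exacts [le_rfl, mul_nonneg (hP i l) (hg0 l)]
  have hle (l : α) : (if l = j then 0 else P i l * g l) ≤ P i l := by
    split_ifs
    exacts [hP i l, mul_le_of_le_one_right (hP i l) (hg1 l)]
  rw [ENNReal.ofReal_tsum_of_nonneg hnonneg (.of_nonneg_of_le hnonneg hle hsummable)]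
  simp only [apply_ite ENNReal.ofReal, ENNReal.ofReal_zero, ENNReal.ofReal_mul (hP i _)]

theorem fpass_le_one (j : α) (n : ℕ) (i : α) : fpass P j n i ≤ 1 := by
  induction n using Nat.twoStepInduction generalizing i with
  | zero => exact zero_le_one
  | one => exact ENNReal.ofReal_le_one.1 ((ENNReal.le_tsum j).trans (hrow i))
  | more n _ ih =>
    rw [← ENNReal.ofReal_le_one, fpass, ofReal_tsum_ite_mul hP hrow i j (fpass_nonneg hP j _) ih]
    refine (ENNReal.tsum_le_tsum fun l => ?_).trans (hrow i)
    split_ifs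
    exacts [zero_le, mul_le_of_le_one_right' (ENNReal.ofReal_le_one.2 (ih l))]

theorem ofReal_fpass_add_two (j : α) (n : ℕ) (i : α) :
    ENNReal.ofReal (fpass P j (n + 2) i) = ∑' l, if l = j then 0 else
      ENNReal.ofReal (P i l) * ENNReal.ofReal (fpass P j (n + 1) l) :=
  ofReal_tsum_ite_mul hP hrow i j (fpass_nonneg hP j _) (fpass_le_one hP hrow j _)

theorem sum_range_ofReal_fpass_succ_le_one (j : α) (N : ℕ) (i : α) :
    ∑ n ∈ Finset.range N, ENNReal.ofReal (fpass P j (n + 1) i) ≤ 1 := by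
  induction N generalizing i with
  | zero => simp
  | succ N ih =>
    calc ∑ n ∈ Finset.range (N + 1), ENNReal.ofReal (fpass P j (n + 1) i)
      _ = ENNReal.ofReal (P i j) + ∑' l, if l = j then 0 else ENNReal.ofReal (P i l) *
            ∑ n ∈ Finset.range N, ENNReal.ofReal (fpass P j (n + 1) l) := by
        rw [Finset.sum_range_succ', add_comm]
        simp only [ofReal_fpass_add_two hP hrow]
        rw [← Summable.tsum_finsetSum fun _ _ => ENNReal.summable]
        simp only [Finset.mul_sum, Finset.sum_ite_irrel, Finset.sum_const_zero, fpass]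
      _ ≤ ENNReal.ofReal (P i j) + ∑' l, if l = j then 0 else ENNReal.ofReal (P i l) := by
        gcongr with l
        split_ifs
        exacts [le_rfl, mul_le_of_le_one_right' (ih l)]
      _ = ∑' l, ENNReal.ofReal (P i l) := by
        rw [ENNReal.tsum_eq_add_tsum_ite (f := fun l => ENNReal.ofReal (P i l)) j]
        congr!
      _ ≤ 1 := hrow i

theorem tsum_ofReal_fpass_le_one (j i : α) : ∑' n, ENNReal.ofReal (fpass P j n i) ≤ 1 := by
  rw [tsum_eq_zero_add' ENNReal.summable, fpass, ENNReal.ofReal_zero, zero_add]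
  exact ENNReal.tsum_le_of_sum_range_le fun N => sum_range_ofReal_fpass_succ_le_one hP hrow j N i

theorem fpassGen_le_one (j : α) {r : ℝ≥0∞} (hr : r ≤ 1) (i : α) : fpassGen P j r i ≤ 1 :=
  (ENNReal.tsum_le_tsum fun n => mul_le_of_le_one_right' (pow_le_one' hr n)).trans
    (tsum_ofReal_fpass_le_one hP hrow j i)

theorem fpassGen_eq_mul_tsum (j : α) (r : ℝ≥0∞) (i : α) :
    fpassGen P j r i =
      r * ∑' l, ENNReal.ofReal (P i l) * if l = j then 1 else fpassGen P j r l := by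
  have hstep (n : ℕ) : ENNReal.ofReal (fpass P j (n + 2) i) * r ^ (n + 2) =
      r * ∑' l, if l = j then 0 else
        ENNReal.ofReal (P i l) * (ENNReal.ofReal (fpass P j (n + 1) l) * r ^ (n + 1)) := by
    rw [ofReal_fpass_add_two hP hrow, pow_succ', mul_left_comm, ← ENNReal.tsum_mul_right]
    simp only [ite_mul, zero_mul, mul_assoc]
  calc fpassGen P j r i
    _ = r * ENNReal.ofReal (P i j) + ∑' n, ENNReal.ofReal (fpass P j (n + 2) i) * r ^ (n + 2) := by
      rw [fpassGen_eq_tsum_succ, tsum_eq_zero_add' ENNReal.summable]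
      simp only [zero_add, fpass, pow_one, mul_comm r]
    _ = r * (ENNReal.ofReal (P i j) + ∑' l, if l = j then 0 else
          ENNReal.ofReal (P i l) * fpassGen P j r l) := by
      simp only [hstep, ENNReal.tsum_mul_left, mul_add, fpassGen_eq_tsum_succ]
      rw [ENNReal.tsum_comm]
      congr! 4 with l
      split_ifs <;> simp [ENNReal.tsum_mul_left]
    _ = r * ∑' l, ENNReal.ofReal (P i l) * if l = j then 1 else fpassGen P j r l := by
      rw [ENNReal.tsum_eq_add_tsum_ite (f := fun l => _ * ite (l = j) _ _) j, if_pos rfl, mul_one]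
      congr! 4 with l
      split_ifs <;> rfl

theorem eventually_fpassGen_self_lt_pow {j : α} (hj : ¬ PositiveRecurrent P j) (A : ℕ) :
    ∀ᶠ r in 𝓝[<] (1 : ℝ≥0∞), fpassGen P j r j < r ^ A := by
  have hle := tsum_ofReal_fpass_le_one hP hrow j j
  rcases hle.lt_or_eq with hlt | heq
  · exact eventually_tsum_mul_pow_lt_pow_of_tsum_lt_one hlt A
  · refine eventually_tsum_mul_pow_lt_pow_of_tsum_natCast_mul_eq_top hle ?_ A
    by_contra hmean
    refine hj ⟨?_, lt_top_iff_ne_top.2 hmean⟩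
    rw [hitProb_eq_toReal_tsum hP, heq, ENNReal.toReal_one]

end Substochastic

end FirstPassage

section Paths

variable {α Ω : Type*}

/-- The event that `X` follows the path `f` up to time `n`, on which the Markov property is
formulated in `IsMarkovChain`. -/
def pathEvent (X : ℕ → Ω → α) (f : ℕ → α) (n : ℕ) : Set Ω :=
  {ω | ∀ k ≤ n, X k ω = f k}

theorem pathEvent_update_succ (X : ℕ → Ω → α) (f : ℕ → α) (n : ℕ) (l : α) :
    pathEvent X (Function.update f (n + 1) l) (n + 1) =
      {ω | X (n + 1) ω = l} ∩ pathEvent X f n := by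
  ext ω
  have hpast : (∀ k ≤ n, X k ω = Function.update f (n + 1) l k) ↔ ∀ k ≤ n, X k ω = f k :=
    forall₂_congr fun k hk => by rw [Function.update_of_ne (by omega)]
  simp [pathEvent, Nat.le_succ_iff_eq_or_le, or_imp, forall_and, hpast]

variable [DecidableEq α]

theorem visits_nonneg (X : ℕ → Ω → α) (j : α) (n : ℕ) (ω : Ω) : 0 ≤ visits X j n ω :=
  Finset.sum_nonneg fun _ _ => by split_ifs <;> norm_num

theorem visits_mono (X : ℕ → Ω → α) (j : α) (ω : Ω) : Monotone fun n => visits X j n ω :=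
  fun _ _ h => Finset.sum_le_sum_of_subset_of_nonneg (Finset.Icc_subset_Icc_right h)
    fun _ _ _ => by split_ifs <;> norm_num

theorem visits_shift_succ (X : ℕ → Ω → α) (j : α) (N n : ℕ) (ω : Ω) :
    visits (fun k => X (k + N)) j (n + 1) ω =
      (if X (N + 1) ω = j then 1 else 0) + visits (fun k => X (k + (N + 1))) j n ω := by
  simp only [visits, ← Finset.Ico_add_one_right_eq_Icc, Finset.sum_Ico_eq_sum_range,
    Nat.add_sub_cancel, Finset.sum_range_succ' _ n]
  rw [add_comm]
  simp only [add_comm, add_left_comm]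

theorem pathEvent_inter_lt_visits_succ_subset (X : ℕ → Ω → α) (j : α) (x : ℝ) (n N : ℕ)
    (f : ℕ → α) :
    pathEvent X f N ∩ {ω | x < visits (fun k => X (k + N)) j (n + 1) ω} ⊆
      ⋃ l, pathEvent X (Function.update f (N + 1) l) (N + 1) ∩
        {ω | x < (if l = j then 1 else 0) + visits (fun k => X (k + (N + 1))) j n ω} := by
  rintro ω ⟨hpath, hx⟩
  refine Set.mem_iUnion.2 ⟨X (N + 1) ω, ?_, ?_⟩
  · rw [pathEvent_update_succ]
    exact ⟨rfl, hpath⟩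
  · rwa [Set.mem_ofPred_eq, visits_shift_succ] at hx

end Paths

section Chain

variable {Ω : Type*} [MeasurableSpace Ω] {μ : Measure Ω}

section

variable {α : Type*} [MeasurableSpace α] {X : ℕ → Ω → α} {P : α → α → ℝ}

theorem IsMarkovChain.tsum_ofReal_eq_one (hMC : IsMarkovChain μ X P) (i : α) :
    ∑' l, ENNReal.ofReal (P i l) = 1 := by
  have hsummable : Summable (P i) := by
    by_contra h
    simpa [tsum_eq_zero_of_not_summable h] using hMC.rowSum i
  rw [← ENNReal.ofReal_tsum_of_nonneg (hMC.nonneg i) hsummable, hMC.rowSum i, ENNReal.ofReal_one]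

theorem IsMarkovChain.measure_pathEvent_update_succ (hMC : IsMarkovChain μ X P)
    (f : ℕ → α) (n : ℕ) (l : α) :
    μ (pathEvent X (Function.update f (n + 1) l) (n + 1)) =
      ENNReal.ofReal (P (f n) l) * μ (pathEvent X f n) := by
  rw [pathEvent_update_succ]
  exact hMC.markov n l f

end

variable [MeasurableSpace S] {X : ℕ → Ω → S} {P : S → S → ℝ} {j : S} {r : ℝ≥0∞}

theorem IsMarkovChain.measure_pathEvent_inter_lt_visits_mul_pow_le (hMC : IsMarkovChain μ X P)
    (hr : r ≤ 1) {h : S → ℝ≥0∞}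
    (hh : ∀ i, r * ∑' l, ENNReal.ofReal (P i l) * (if l = j then 1 else h l) ≤ h i)
    (n m N : ℕ) (f : ℕ → S) :
    μ (pathEvent X f N ∩ {ω | m < visits (fun k => X (k + N)) j n ω}) * r ^ n ≤
      μ (pathEvent X f N) * (h (f N) * h j ^ m) := by
  induction n generalizing m N f with
  | zero => simp [visits, not_lt.2]
  | succ n ih =>
    set C : S → Set Ω := fun l => pathEvent X (Function.update f (N + 1) l) (N + 1)
    set V : Ω → ℝ := visits (fun k => X (k + (N + 1))) j n
    have hnext (l : S) : μ (C l ∩ {ω | m < (if l = j then 1 else 0) + V ω}) * r ^ n ≤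
        μ (C l) * ((if l = j then 1 else h l) * h j ^ m) := by
      split_ifs with hl
      · cases m with
        | zero =>
          rw [pow_zero, mul_one]
          exact mul_le_mul' (measure_mono Set.inter_subset_left) (pow_le_one' hr n)
        | succ m =>
          simpa [C, V, hl, add_comm (1 : ℝ), pow_succ'] using
            ih m (N + 1) (Function.update f (N + 1) l)
      · simpa [C, V] using ih m (N + 1) (Function.update f (N + 1) l)
    calc _ ≤ (∑' l, μ (C l ∩ {ω | m < (if l = j then 1 else 0) + V ω})) * r ^ (n + 1) := by
          gcongr
          exact (measure_mono (pathEvent_inter_lt_visits_succ_subset X j m n N f)).trans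
            (measure_iUnion_le _)
      _ = r * ∑' l, μ (C l ∩ {ω | m < (if l = j then 1 else 0) + V ω}) * r ^ n := by
          rw [ENNReal.tsum_mul_right, pow_succ]
          ring
      _ ≤ r * ∑' l, μ (C l) * ((if l = j then 1 else h l) * h j ^ m) :=
          mul_le_mul_right (ENNReal.tsum_le_tsum hnext) r
      _ = μ (pathEvent X f N) * ((r * ∑' l, ENNReal.ofReal (P (f N) l) *
            (if l = j then 1 else h l)) * h j ^ m) := by
          simp only [C, hMC.measure_pathEvent_update_succ, ← ENNReal.tsum_mul_left,
            ← ENNReal.tsum_mul_right]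
          congr! 2 with l
          ring
      _ ≤ μ (pathEvent X f N) * (h (f N) * h j ^ m) := by
          gcongr
          exact hh (f N)

theorem IsMarkovChain.measure_lt_visits_le (hMC : IsMarkovChain μ X P) (hr0 : r ≠ 0) (hr1 : r ≤ 1)
    (i : S) (n m : ℕ) :
    μ {ω | X 0 ω = i ∧ m < visits X j n ω} ≤ fpassGen P j r j ^ m / r ^ n := by
  have := hMC.isProb
  have hrow (i : S) := (hMC.tsum_ofReal_eq_one i).le
  have hpath : pathEvent X (fun _ => i) 0 = {ω | X 0 ω = i} := by simp [pathEvent]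
  rw [ENNReal.le_div_iff_mul_le (.inl (pow_ne_zero n hr0))
    (.inl (ENNReal.pow_ne_top (ne_top_of_le_ne_top ENNReal.one_ne_top hr1)))]
  calc μ {ω | X 0 ω = i ∧ m < visits X j n ω} * r ^ n
    _ ≤ μ {ω | X 0 ω = i} * (fpassGen P j r i * fpassGen P j r j ^ m) := by
      simpa only [hpath, ← Set.ofPred_and, add_zero] using
        hMC.measure_pathEvent_inter_lt_visits_mul_pow_le hr1
          (fun i => (fpassGen_eq_mul_tsum hMC.nonneg hrow j r i).ge) n m 0 fun _ => i
    _ ≤ fpassGen P j r j ^ m := mul_le_of_le_one_of_le prob_le_one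
        (mul_le_of_le_one_left' (fpassGen_le_one hMC.nonneg hrow j hr1 i))

theorem IsMarkovChain.ae_eventually_visits_mul_le (hMC : IsMarkovChain μ X P)
    (hj : ¬ PositiveRecurrent P j) (A : ℕ) :
    ∀ᵐ ω ∂μ, ∀ᶠ m : ℕ in atTop, visits X j (A * m) ω ≤ m := by
  have hrow (i : S) := (hMC.tsum_ofReal_eq_one i).le
  obtain ⟨r, hlt, hr0, hr1⟩ := ((eventually_fpassGen_self_lt_pow hMC.nonneg hrow hj A).and
    (Ioo_mem_nhdsLT zero_lt_one)).exists
  have hratio : fpassGen P j r j / r ^ A < 1 := ENNReal.div_lt_of_lt_mul (by rwa [one_mul])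
  have hpow (m : ℕ) : fpassGen P j r j ^ m / r ^ (A * m) = (fpassGen P j r j / r ^ A) ^ m := by
    rw [pow_mul, div_eq_mul_inv, div_eq_mul_inv, mul_pow, ENNReal.inv_pow]
  have hsum (i : S) : ∑' m : ℕ, μ {ω | X 0 ω = i ∧ m < visits X j (A * m) ω} ≠ ⊤ := by
    refine ne_top_of_le_ne_top ?_
      (ENNReal.tsum_le_tsum fun m => hMC.measure_lt_visits_le hr0.ne' hr1.le i (A * m) m)
    simp only [hpow, ENNReal.tsum_geometric]
    exact ENNReal.inv_ne_top.2 (tsub_pos_of_lt hratio).ne'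
  filter_upwards [ae_all_iff.2 fun i => ae_eventually_notMem (hsum i)] with ω hω
  filter_upwards [hω (X 0 ω)] with m hm
  exact not_lt.1 fun hlt => hm ⟨rfl, hlt⟩

end Chain

theorem visits_div_n_tendsto_zero_of_nullRecurrent_general
    {Ω : Type*} [MeasurableSpace Ω] [MeasurableSpace S] (μ : Measure Ω)
    (X : ℕ → Ω → S) (P : S → S → ℝ) (hMC : IsMarkovChain μ X P) (j : S)
    (hj : ¬ PositiveRecurrent P j) :
    μ {ω | Tendsto (fun n : ℕ => visits X j n ω / (n : ℝ)) atTop (𝓝 0)} = 1 := by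
  have := hMC.isProb
  have hlim : ∀ᵐ ω ∂μ, Tendsto (fun n : ℕ => visits X j n ω / (n : ℝ)) atTop (𝓝 0) := by
    filter_upwards [ae_all_iff.2 (hMC.ae_eventually_visits_mul_le hj)] with ω hω
    exact tendsto_div_atTop_zero_of_eventually_mul_le (visits_mono X j ω)
      (visits_nonneg X j · ω) hω
  rw [measure_congr (eventuallyEq_univ.2 hlim), measure_univ]

/-- If `j` is null recurrent then the fraction of time spent at `j` converges to `0`
almost surely. -/
theorem visits_div_n_tendsto_zero_of_nullRecurrent
    {Ω : Type*} [MeasurableSpace Ω] [MeasurableSpace S] (μ : Measure Ω)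
    (X : ℕ → Ω → S) (P : S → S → ℝ) (hMC : IsMarkovChain μ X P) (j : S)
    (hj : NullRecurrent P j) :
    μ {ω | Tendsto (fun n : ℕ => visits X j n ω / (n : ℝ)) atTop (𝓝 0)} = 1 :=
  visits_div_n_tendsto_zero_of_nullRecurrent_general μ X P hMC j fun h => h.2.ne hj.2
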